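/- arXiv:2110.03838 — 4 statements merged into one kernel-verified Lean document; each statement's English description precedes it below -/
import Mathlib

section
/- For every p ≥ 1, the on-diagonal coefficient matrix K ∈ ℝ^{N_p×N_p} is non-singular; consequently the linear system K G(h) ω(h) = c(h) has a unique solution whenever G(h) is non-singular. -/
/-- The set `𝓖_γ` of all sign changes of `(γ₁, γ₂)`. -/
def Gon (γ : ℕ × ℕ) : Finset (ℤ × ℤ) :=
  {((γ.1 : ℤ), (γ.2 : ℤ)), (-(γ.1 : ℤ), (γ.2 : ℤ)), ((γ.1 : ℤ), -(γ.2 : ℤ)),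
    (-(γ.1 : ℤ), -(γ.2 : ℤ))}

/-- The Newton basis polynomial with nodes `k^2`, `k < a`. -/
noncomputable def newtonP (a : ℕ) : Polynomial ℝ :=
  ∏ k ∈ Finset.range a, (Polynomial.X - Polynomial.C ((k : ℝ) ^ 2))

lemma newtonP_natDegree (a : ℕ) : (newtonP a).natDegree = a := by
  unfold newtonP
  rw [Polynomial.natDegree_prod_of_monic _ _ (fun k _ => Polynomial.monic_X_sub_C _)]
  simp only [Polynomial.natDegree_X_sub_C, Finset.sum_const, Finset.card_range, smul_eq_mul, mul_one]

lemma newtonP_eval_lt {a n : ℕ} (h : n < a) : (newtonP a).eval ((n : ℝ) ^ 2) = 0 := by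
  unfold newtonP
  rw [Polynomial.eval_prod]
  exact Finset.prod_eq_zero (Finset.mem_range.2 h) (by simp)

lemma newtonP_eval_self (a : ℕ) : (newtonP a).eval ((a : ℝ) ^ 2) ≠ 0 := by
  unfold newtonP
  rw [Polynomial.eval_prod]
  refine Finset.prod_ne_zero_iff.2 fun k hk => ?_
  have hk' : (k : ℝ) < a := by exact_mod_cast Finset.mem_range.1 hk
  have h0 : (0 : ℝ) ≤ k := by positivity
  simp only [Polynomial.eval_sub, Polynomial.eval_X, Polynomial.eval_C]
  nlinarith

lemma sum_Gon (γ : ℕ × ℕ) (m n : ℕ) :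
    ∑ β ∈ Gon γ, (β.1 : ℝ) ^ (2 * m) * (β.2 : ℝ) ^ (2 * n)
      = ((Gon γ).card : ℝ) * (((γ.1 : ℝ) ^ 2) ^ m * ((γ.2 : ℝ) ^ 2) ^ n) := by
  rw [← nsmul_eq_mul, ← Finset.sum_const]
  refine Finset.sum_congr rfl fun β hβ => ?_
  simp only [Gon, Finset.mem_insert, Finset.mem_singleton] at hβ
  rcases hβ with rfl | rfl | rfl | rfl <;> simp [pow_mul]

lemma Gon_card_ne (γ : ℕ × ℕ) : ((Gon γ).card : ℝ) ≠ 0 := by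
  have : (Gon γ).Nonempty := ⟨((γ.1 : ℤ), (γ.2 : ℤ)), by simp [Gon]⟩
  exact_mod_cast this.card_pos.ne'

lemma poly_sum_zero {ι : Type*} [Fintype ι] (p : ℕ) (w x y : ι → ℝ)
    (h : ∀ m n : ℕ, m + n ≤ p → ∑ j, w j * (x j ^ m * y j ^ n) = 0)
    (f g : Polynomial ℝ) (hfg : f.natDegree + g.natDegree ≤ p) :
    ∑ j, w j * (f.eval (x j) * g.eval (y j)) = 0 := by
  have : ∀ j, w j * (f.eval (x j) * g.eval (y j)) =
      ∑ m ∈ Finset.range (f.natDegree + 1), ∑ n ∈ Finset.range (g.natDegree + 1),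
        f.coeff m * g.coeff n * (w j * (x j ^ m * y j ^ n)) := by
    intro j
    rw [Polynomial.eval_eq_sum_range, Polynomial.eval_eq_sum_range, Finset.sum_mul_sum,
      Finset.mul_sum]
    refine Finset.sum_congr rfl fun m _ => ?_
    rw [Finset.mul_sum]
    refine Finset.sum_congr rfl fun n _ => ?_
    ring
  simp_rw [this]
  rw [Finset.sum_comm]
  refine Finset.sum_eq_zero fun m hm => ?_
  rw [Finset.sum_comm]
  refine Finset.sum_eq_zero fun n hn => ?_
  rw [← Finset.mul_sum, h m n, mul_zero]
  have := Finset.mem_range.1 hm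
  have := Finset.mem_range.1 hn
  omega

/-- non-singularity of the on-diagonal coefficient matrix `K`, and unique
solvability of the moment linear system whenever `G(h)` is non-singular. -/
theorem on_diagonal_coefficient_matrix_nonsingular
    (p : ℕ) (hp : 1 ≤ p) (Np : ℕ) (hNp : Np = (p + 1) * (p + 2) / 2)
    (ξ : Fin Np → ℕ × ℕ) (hξinj : Function.Injective ξ)
    (hξmem : ∀ i, (ξ i).1 + (ξ i).2 ≤ p)
    (hξsurj : ∀ γ : ℕ × ℕ, γ.1 + γ.2 ≤ p → ∃ i, ξ i = γ)
    (K : Matrix (Fin Np) (Fin Np) ℝ)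
    (hK : ∀ i j, K i j = ∑ β ∈ Gon (ξ j),
      (β.1 : ℝ) ^ (2 * (ξ i).1) * (β.2 : ℝ) ^ (2 * (ξ i).2)) :
    K.det ≠ 0 ∧
    ∀ G : Matrix (Fin Np) (Fin Np) ℝ, G.det ≠ 0 →
      ∀ c : Fin Np → ℝ, ∃! ω : Fin Np → ℝ, (K * G).mulVec ω = c := by
  have hdet : K.det ≠ 0 := by
    intro h0
    obtain ⟨v, hv, hKv⟩ := Matrix.exists_mulVec_eq_zero_iff.2 h0
    apply hv
    have hmom : ∀ m n : ℕ, m + n ≤ p →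
        ∑ j, (((Gon (ξ j)).card : ℝ) * v j) *
          ((((ξ j).1 : ℝ) ^ 2) ^ m * (((ξ j).2 : ℝ) ^ 2) ^ n) = 0 := by
      intro m n hmn
      obtain ⟨i, hi⟩ := hξsurj (m, n) hmn
      have h1 := congrFun hKv i
      simp only [Matrix.mulVec, dotProduct, Pi.zero_apply] at h1
      rw [← h1]
      refine Finset.sum_congr rfl fun j _ => ?_
      rw [hK, sum_Gon, hi]
      ring
    have key : ∀ d : ℕ, ∀ j, p - ((ξ j).1 + (ξ j).2) = d → v j = 0 := by
      intro d
      induction d using Nat.strong_induction_on with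
      | _ d ih =>
        intro j hj
        have hs := poly_sum_zero p _ _ _ hmom (newtonP (ξ j).1) (newtonP (ξ j).2)
          (by rw [newtonP_natDegree, newtonP_natDegree]; exact hξmem j)
        rw [Finset.sum_eq_single j] at hs
        · have h1 := newtonP_eval_self (ξ j).1
          have h2 := newtonP_eval_self (ξ j).2
          have h3 := Gon_card_ne (ξ j)
          simpa [h1, h2, h3] using hs
        · intro k _ hk
          by_cases ha : (ξ k).1 < (ξ j).1
          · rw [newtonP_eval_lt ha]; ring
          by_cases hb : (ξ k).2 < (ξ j).2
          · rw [newtonP_eval_lt hb]; ring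
          have hne : ¬ ((ξ k).1 = (ξ j).1 ∧ (ξ k).2 = (ξ j).2) :=
            fun h => hk (hξinj (Prod.ext h.1 h.2))
          have hm1 := hξmem k
          have hm2 := hξmem j
          rw [ih (p - ((ξ k).1 + (ξ k).2)) (by omega) k rfl]
          ring
        · simp
    funext j
    exact key _ j rfl
  refine ⟨hdet, fun G hG c => ?_⟩
  have hu : IsUnit (K * G) := by
    rw [Matrix.isUnit_iff_isUnit_det, Matrix.det_mul]
    exact (mul_ne_zero hdet hG).isUnit
  have hb : Function.Bijective (K * G).mulVec :=
    ⟨Matrix.mulVec_injective_iff_isUnit.2 hu, Matrix.mulVec_surjective_iff_isUnit.2 hu⟩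
  exact hb.existsUnique c
end

section
/- Let p ∈ ℕ with p ≥ 2 and let K ∈ ℝ^{N_p×N_p} be the off-diagonal coefficient matrix for a fixed enumeration (ξ₁,…,ξ_{N_p}) of 𝓘_p. Then K = E·H, where H ∈ ℝ^{N_p×N_p} is the diagonal matrix with H_{jj} = 2/(ξ_{j,1}ξ_{j,2}) if ξ_{j,1} = ξ_{j,2} and H_{jj} = 4/(ξ_{j,1}ξ_{j,2}) otherwise, and E ∈ ℝ^{N_p×N_p} is given by E_{ij} = ξ_{j,1}^{2ξ_{i,1}} ξ_{j,2}^{2ξ_{i,2}} + ξ_{j,2}^{2ξ_{i,1}} ξ_{j,1}^{2ξ_{i,2}}, with ξ_i = (ξ_{i,1},ξ_{i,2}) and ξ_j = (ξ_{j,1},ξ_{j,2}). -/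
/-- The set `𝓖_γ` of all sign changes of `(γ₁, γ₂)` and of the swapped pair `(γ₂, γ₁)`. -/
def Goff (γ : ℕ × ℕ) : Finset (ℤ × ℤ) :=
  {((γ.1 : ℤ), (γ.2 : ℤ)), (-(γ.1 : ℤ), (γ.2 : ℤ)), ((γ.1 : ℤ), -(γ.2 : ℤ)),
    (-(γ.1 : ℤ), -(γ.2 : ℤ)), ((γ.2 : ℤ), (γ.1 : ℤ)), (-(γ.2 : ℤ), (γ.1 : ℤ)),
    ((γ.2 : ℤ), -(γ.1 : ℤ)), (-(γ.2 : ℤ), -(γ.1 : ℤ))}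

lemma Goff_aux (a b m n : ℕ) (ha : 1 ≤ a) (hb : 1 ≤ b) (hm : 1 ≤ m) (hn : 1 ≤ n) :
    (∑ β ∈ Goff (a, b), ((β.1 * β.2).sign : ℝ) *
        ((β.1 : ℝ) ^ (2 * m - 1) * (β.2 : ℝ) ^ (2 * n - 1))) =
      ((a : ℝ) ^ (2 * m) * (b : ℝ) ^ (2 * n) + (b : ℝ) ^ (2 * m) * (a : ℝ) ^ (2 * n)) *
        (if a = b then 2 / ((a : ℝ) * (b : ℝ)) else 4 / ((a : ℝ) * (b : ℝ))) := by
  obtain ⟨m, rfl⟩ := Nat.exists_eq_add_of_le' hm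
  obtain ⟨n, rfl⟩ := Nat.exists_eq_add_of_le' hn
  have e1 : 2 * (m + 1) - 1 = 2 * m + 1 := by omega
  have e2 : 2 * (n + 1) - 1 = 2 * n + 1 := by omega
  have ha' : (a : ℝ) ≠ 0 := by positivity
  have hb' : (b : ℝ) ≠ 0 := by positivity
  have om : Odd (2 * m + 1) := ⟨m, rfl⟩
  have on : Odd (2 * n + 1) := ⟨n, rfl⟩
  have sa : Int.sign (a : ℤ) = 1 := Int.sign_eq_one_of_pos (by omega)
  have sb : Int.sign (b : ℤ) = 1 := Int.sign_eq_one_of_pos (by omega)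
  rw [e1, e2]
  by_cases h : a = b
  · subst h
    have hG : Goff (a, a) = {((a : ℤ), (a : ℤ)), (-(a : ℤ), (a : ℤ)), ((a : ℤ), -(a : ℤ)),
        (-(a : ℤ), -(a : ℤ))} := by
      ext x
      simp only [Goff, Finset.mem_insert, Finset.mem_singleton]
      tauto
    rw [hG, Finset.sum_insert, Finset.sum_insert, Finset.sum_insert, Finset.sum_singleton]
    · simp only [Int.sign_mul, Int.sign_neg, sa, Int.cast_neg, Int.cast_natCast, om.neg_pow,
        on.neg_pow, if_true]
      push_cast
      field_simp
      ring
    all_goals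
      simp only [Finset.mem_insert, Finset.mem_singleton, Prod.mk.injEq]
      omega
  · unfold Goff
    rw [Finset.sum_insert, Finset.sum_insert, Finset.sum_insert, Finset.sum_insert,
      Finset.sum_insert, Finset.sum_insert, Finset.sum_insert, Finset.sum_singleton]
    · simp only [Int.sign_mul, Int.sign_neg, sa, sb, Int.cast_neg, Int.cast_natCast, om.neg_pow,
        on.neg_pow, if_neg h]
      push_cast
      field_simp
      ring
    all_goals
      simp only [Finset.mem_insert, Finset.mem_singleton, Prod.mk.injEq]
      omega

/-- factorization `K = E·H` of the off-diagonal coefficient matrix. -/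
theorem off_diagonal_coefficient_matrix_factorization
    (p : ℕ) (hp : 2 ≤ p) (Np : ℕ)
    (ξ : Fin Np → ℕ × ℕ) (hξinj : Function.Injective ξ)
    (hξmem : ∀ i, 1 ≤ (ξ i).2 ∧ (ξ i).2 ≤ (ξ i).1 ∧ (ξ i).1 + (ξ i).2 ≤ p)
    (hξsurj : ∀ γ : ℕ × ℕ, 1 ≤ γ.2 → γ.2 ≤ γ.1 → γ.1 + γ.2 ≤ p → ∃ i, ξ i = γ)
    (K : Matrix (Fin Np) (Fin Np) ℝ)
    (hK : ∀ i j, K i j = ∑ β ∈ Goff (ξ j),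
      ((β.1 * β.2).sign : ℝ) *
        ((β.1 : ℝ) ^ (2 * (ξ i).1 - 1) * (β.2 : ℝ) ^ (2 * (ξ i).2 - 1))) :
    K = (Matrix.of fun i j : Fin Np =>
          ((ξ j).1 : ℝ) ^ (2 * (ξ i).1) * ((ξ j).2 : ℝ) ^ (2 * (ξ i).2) +
            ((ξ j).2 : ℝ) ^ (2 * (ξ i).1) * ((ξ j).1 : ℝ) ^ (2 * (ξ i).2)) *
        Matrix.diagonal (fun j =>
          if (ξ j).1 = (ξ j).2 then 2 / (((ξ j).1 : ℝ) * ((ξ j).2 : ℝ))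
          else 4 / (((ξ j).1 : ℝ) * ((ξ j).2 : ℝ))) := by
  ext i j
  rw [hK, Matrix.mul_diagonal, Matrix.of_apply]
  obtain ⟨h1, h2, -⟩ := hξmem i
  obtain ⟨h3, h4, -⟩ := hξmem j
  exact Goff_aux (ξ j).1 (ξ j).2 (ξ i).1 (ξ i).2 (by omega) h3 (by omega) h1
end

section
/- Let p ∈ ℕ with p ≥ 2 and fix an enumeration (ξ₁,…,ξ_{N_p}) of 𝓘_p = {(a,b) ∈ ℕ² : a ≥ b ≥ 1, a+b ≤ p}. For real variables x₁,…,x_{p−1}, define T ∈ ℝ^{N_p×N_p} by T_{ij} = x_{ξ_{j,1}}^{ξ_{i,1}} x_{ξ_{j,2}}^{ξ_{i,2}} + x_{ξ_{j,2}}^{ξ_{i,1}} x_{ξ_{j,1}}^{ξ_{i,2}}, where ξ_i = (ξ_{i,1},ξ_{i,2}) and ξ_j = (ξ_{j,1},ξ_{j,2}). Then there exists a nonzero real constant C (depending only on p and the enumeration) such that for all (x₁,…,x_{p−1}) ∈ ℝ^{p−1}: det T = C · ∏_{1≤j≤⌊p/2⌋} x_j^{p+1−j} · ∏_{⌊p/2⌋<j≤p−1}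 x_j^{p−j} · ∏_{1≤i<j≤⌊p/2⌋} (x_j−x_i)^{p+1−j} · ∏_{1≤i<j, ⌊p/2⌋<j≤p−1} (x_j−x_i)^{p−j}. -/
open Finset in
lemma aux_tri {m α : Type*} [Fintype m] [DecidableEq m] [LinearOrder α] (f : m → α)
    (hf : Function.Injective f) (M : Matrix m m ℝ) (h : ∀ i j, M i j ≠ 0 → f j ≤ f i) :
    M.det = ∏ i, M i i := by
  letI : LinearOrder m := LinearOrder.lift' f hf
  have := Matrix.det_of_lowerTriangular M (by
    intro i j hij
    by_contra hne
    have h1 := h i j hne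
    have h2 : f i < f j := hij
    exact absurd h1 (not_le.mpr h2))
  convert this

noncomputable def auxP (x : ℕ → ℝ) (a : ℕ) : Polynomial ℝ :=
  Polynomial.X * ∏ i ∈ Finset.Ico 1 a, (Polynomial.X - Polynomial.C (x i))

lemma auxP_monic (x : ℕ → ℝ) (a : ℕ) : (auxP x a).Monic :=
  Polynomial.monic_X.mul (Polynomial.monic_prod_of_monic _ _ fun _ _ => Polynomial.monic_X_sub_C _)

lemma auxP_deg (x : ℕ → ℝ) (a : ℕ) (ha : 1 ≤ a) : (auxP x a).natDegree = a := by
  unfold auxP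
  rw [Polynomial.Monic.natDegree_mul Polynomial.monic_X
    (Polynomial.monic_prod_of_monic _ _ fun _ _ => Polynomial.monic_X_sub_C _),
    Polynomial.natDegree_prod_of_monic _ _ fun _ _ => Polynomial.monic_X_sub_C _]
  simp
  omega

lemma auxP_coeff_self (x : ℕ → ℝ) (a : ℕ) (ha : 1 ≤ a) : (auxP x a).coeff a = 1 := by
  have := auxP_monic x a
  rw [Polynomial.Monic, Polynomial.leadingCoeff, auxP_deg x a ha] at this
  exact this

lemma auxP_coeff_ne (x : ℕ → ℝ) (a c : ℕ) (ha : 1 ≤ a) (h : (auxP x a).coeff c ≠ 0) :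
    1 ≤ c ∧ c ≤ a := by
  constructor
  · by_contra h0
    have : c = 0 := by omega
    subst this
    apply h
    simp [auxP]
  · have := Polynomial.le_natDegree_of_ne_zero h
    rwa [auxP_deg x a ha] at this

lemma auxP_eval (x : ℕ → ℝ) (a : ℕ) (y : ℝ) :
    (auxP x a).eval y = y * ∏ i ∈ Finset.Ico 1 a, (y - x i) := by
  simp [auxP, Polynomial.eval_prod]

lemma auxP_eval_ne (x : ℕ → ℝ) (a c : ℕ) (hc : 1 ≤ c) (h : (auxP x a).eval (x c) ≠ 0) :
    a ≤ c := by
  by_contra hlt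
  apply h
  rw [auxP_eval, Finset.prod_eq_zero (i := c) (by simp; omega) (by simp), mul_zero]

lemma auxP_eval_sum (x : ℕ → ℝ) (p a : ℕ) (ha : 1 ≤ a) (hap : a ≤ p) (y : ℝ) :
    (auxP x a).eval y = ∑ c ∈ Finset.range (p + 1), (auxP x a).coeff c * y ^ c := by
  rw [Polynomial.eval_eq_sum_range' (n := p + 1)]
  rw [auxP_deg x a ha]; omega

lemma aux_half (n : ℕ) (g : ℕ × ℕ → ℝ) :
    ∑ q ∈ Finset.range n ×ˢ Finset.range n, g q =
    ∑ q ∈ (Finset.range n ×ˢ Finset.range n).filter (fun q => q.2 ≤ q.1),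
      (g q + if q.1 ≠ q.2 then g (q.2, q.1) else 0) := by
  rw [Finset.sum_add_distrib, ← Finset.sum_filter,
    ← Finset.sum_filter_add_sum_filter_not (Finset.range n ×ˢ Finset.range n)
      (fun q => q.2 ≤ q.1) g]
  congr 1
  refine Finset.sum_nbij' (fun q => (q.2, q.1)) (fun q => (q.2, q.1)) ?_ ?_ ?_ ?_ ?_
  · intro q; simp; omega
  · intro q; simp; omega
  · intro q _; rfl
  · intro q _; rfl
  · intro q _; rfl

noncomputable def auxL (x : ℕ → ℝ) (q r : ℕ × ℕ) : ℝ :=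
  (auxP x q.1).coeff r.1 * (auxP x q.2).coeff r.2 +
    if r.1 ≠ r.2 then (auxP x q.1).coeff r.2 * (auxP x q.2).coeff r.1 else 0

lemma aux_count (p : ℕ) (F : ℕ → ℝ) (s : Finset (ℕ × ℕ))
    (hs : ∀ q : ℕ × ℕ, q ∈ s ↔ 1 ≤ q.2 ∧ q.2 ≤ q.1 ∧ q.1 + q.2 ≤ p) :
    ∏ q ∈ s, (F q.1 * F q.2) =
      (∏ j ∈ Finset.Icc 1 (p / 2), F j ^ (p + 1 - j)) *
          (∏ j ∈ Finset.Icc (p / 2 + 1) (p - 1), F j ^ (p - j)) := by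
  have h1 : ∏ q ∈ s, F q.1 = ∏ j ∈ Finset.Icc 1 (p - 1), F j ^ (min j (p - j)) := by
    rw [← Finset.prod_fiberwise_of_maps_to (g := Prod.fst) (t := Finset.Icc 1 (p - 1))]
    · refine Finset.prod_congr rfl fun j hj => ?_
      rw [Finset.prod_congr rfl (g := fun _ => F j) (by simp +contextual), Finset.prod_const]
      congr 1
      have : (s.filter fun q => q.1 = j) = (Finset.Icc 1 (min j (p - j))).image (fun b => (j, b)) := by
        ext ⟨a, b⟩
        simp at hj
        simp [hs]
        omega
      rw [this, Finset.card_image_of_injective _ (fun a b h => by simpa using h)]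
      simp
    · intro q hq
      rw [hs] at hq
      simp; omega
  have h2 : ∏ q ∈ s, F q.2 = ∏ j ∈ Finset.Icc 1 (p - 1), F j ^ (p - j + 1 - j) := by
    rw [← Finset.prod_fiberwise_of_maps_to (g := Prod.snd) (t := Finset.Icc 1 (p - 1))]
    · refine Finset.prod_congr rfl fun j hj => ?_
      rw [Finset.prod_congr rfl (g := fun _ => F j) (by simp +contextual), Finset.prod_const]
      congr 1
      have : (s.filter fun q => q.2 = j) = (Finset.Icc j (p - j)).image (fun b => (b, j)) := by
        ext ⟨a, b⟩
        simp at hj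
        simp [hs]
        omega
      rw [this, Finset.card_image_of_injective _ (fun a b h => by simpa using h)]
      simp
    · intro q hq
      rw [hs] at hq
      simp; omega
  rw [Finset.prod_mul_distrib, h1, h2, ← Finset.prod_mul_distrib]
  have hd : Disjoint (Finset.Icc 1 (p / 2)) (Finset.Icc (p / 2 + 1) (p - 1)) := by
    rw [Finset.disjoint_left]; intro a; simp; omega
  by_cases hp : 2 ≤ p
  · have hu : Finset.Icc 1 (p - 1) = Finset.Icc 1 (p / 2) ∪ Finset.Icc (p / 2 + 1) (p - 1) := by
      ext a; simp; omega
    rw [hu, Finset.prod_union hd]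
    congr 1
    · refine Finset.prod_congr rfl fun j hj => ?_
      simp at hj
      rw [← pow_add]; congr 1; omega
    · refine Finset.prod_congr rfl fun j hj => ?_
      simp at hj
      rw [← pow_add]; congr 1; omega
  · have a1 : p - 1 = 0 := by omega
    have a2 : p / 2 = 0 := by omega
    simp [a1, a2]

/-- determinant factorization of the symmetrized monomial matrix `T` built
from the index set `𝓘_p = {(a,b) ∈ ℕ² : a ≥ b ≥ 1, a+b ≤ p}`. -/
theorem off_diagonal_monomial_determinant
    (p : ℕ) (hp : 2 ≤ p) (Np : ℕ)
    (ξ : Fin Np → ℕ × ℕ) (hξinj : Function.Injective ξ)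
    (hξmem : ∀ i, 1 ≤ (ξ i).2 ∧ (ξ i).2 ≤ (ξ i).1 ∧ (ξ i).1 + (ξ i).2 ≤ p)
    (hξsurj : ∀ γ : ℕ × ℕ, 1 ≤ γ.2 → γ.2 ≤ γ.1 → γ.1 + γ.2 ≤ p → ∃ i, ξ i = γ) :
    ∃ C : ℝ, C ≠ 0 ∧ ∀ x : ℕ → ℝ,
      (Matrix.of fun i j : Fin Np =>
          x (ξ j).1 ^ (ξ i).1 * x (ξ j).2 ^ (ξ i).2 +
            x (ξ j).2 ^ (ξ i).1 * x (ξ j).1 ^ (ξ i).2).det =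
        C * (∏ j ∈ Finset.Icc 1 (p / 2), x j ^ (p + 1 - j)) *
          (∏ j ∈ Finset.Icc (p / 2 + 1) (p - 1), x j ^ (p - j)) *
          (∏ j ∈ Finset.Icc 1 (p / 2), ∏ i ∈ Finset.Ico 1 j, (x j - x i) ^ (p + 1 - j)) *
          ∏ j ∈ Finset.Icc (p / 2 + 1) (p - 1), ∏ i ∈ Finset.Ico 1 j,
            (x j - x i) ^ (p - j) := by
  classical
  have hmem : ∀ q : ℕ × ℕ, q ∈ Finset.univ.image ξ ↔ 1 ≤ q.2 ∧ q.2 ≤ q.1 ∧ q.1 + q.2 ≤ p := by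
    intro q
    simp only [Finset.mem_image, Finset.mem_univ, true_and]
    constructor
    · rintro ⟨i, rfl⟩; exact hξmem i
    · rintro ⟨h1, h2, h3⟩; exact hξsurj q h1 h2 h3
  refine ⟨∏ i, if (ξ i).1 = (ξ i).2 then 2 else 1, ?_, ?_⟩
  · rw [Finset.prod_ne_zero_iff]
    intro i _
    split_ifs <;> norm_num
  intro x
  set T : Matrix (Fin Np) (Fin Np) ℝ := Matrix.of fun i j : Fin Np =>
          x (ξ j).1 ^ (ξ i).1 * x (ξ j).2 ^ (ξ i).2 +
            x (ξ j).2 ^ (ξ i).1 * x (ξ j).1 ^ (ξ i).2 with hT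
  let L : Matrix (Fin Np) (Fin Np) ℝ := Matrix.of fun i k => auxL x (ξ i) (ξ k)
  let S : Matrix (Fin Np) (Fin Np) ℝ := Matrix.of fun i j =>
    (auxP x (ξ i).1).eval (x (ξ j).1) * (auxP x (ξ i).2).eval (x (ξ j).2) +
    (auxP x (ξ i).1).eval (x (ξ j).2) * (auxP x (ξ i).2).eval (x (ξ j).1)
  have hle : ∀ i j, (ξ j).1 ≤ (ξ i).1 → (ξ j).2 ≤ (ξ i).2 → toLex (ξ j) ≤ toLex (ξ i) := by
    intro i j h1 h2
    exact Prod.Lex.toLex_mono (Prod.mk_le_mk.mpr ⟨h1, h2⟩)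
  have hinj : Function.Injective fun i => toLex (ξ i) := fun i j h => hξinj (by simpa using h)
  have hLS : L * T = S := by
    ext i j
    obtain ⟨hb, hab, habp⟩ := hξmem i
    set u := x (ξ j).1 with hu
    set v := x (ξ j).2 with hv
    have e1 : S i j = ∑ q ∈ Finset.range (p + 1) ×ˢ Finset.range (p + 1),
        (auxP x (ξ i).1).coeff q.1 * (auxP x (ξ i).2).coeff q.2 *
          (u ^ q.1 * v ^ q.2 + v ^ q.1 * u ^ q.2) := by
      simp only [S, Matrix.of_apply]
      rw [auxP_eval_sum x p _ (by omega) (by omega), auxP_eval_sum x p _ (by omega) (by omega),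
        auxP_eval_sum x p _ (by omega) (by omega), auxP_eval_sum x p _ (by omega) (by omega),
        Finset.sum_mul_sum, Finset.sum_mul_sum, ← Finset.sum_product', ← Finset.sum_product',
        ← Finset.sum_add_distrib]
      refine Finset.sum_congr rfl fun q _ => ?_
      ring
    rw [e1, aux_half, Matrix.mul_apply]
    have e2 : ∑ k, L i k * T k j = ∑ q ∈ Finset.univ.image ξ, auxL x (ξ i) q *
        (u ^ q.1 * v ^ q.2 + v ^ q.1 * u ^ q.2) := by
      rw [Finset.sum_image (fun a _ b _ h => hξinj h)]
      rfl
    rw [e2]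
    have e3 : ∀ q : ℕ × ℕ, auxL x (ξ i) q * (u ^ q.1 * v ^ q.2 + v ^ q.1 * u ^ q.2) =
        (auxP x (ξ i).1).coeff q.1 * (auxP x (ξ i).2).coeff q.2 *
          (u ^ q.1 * v ^ q.2 + v ^ q.1 * u ^ q.2) + if q.1 ≠ q.2 then
        (auxP x (ξ i).1).coeff q.2 * (auxP x (ξ i).2).coeff q.1 *
          (u ^ q.2 * v ^ q.1 + v ^ q.2 * u ^ q.1) else 0 := by
      intro q
      unfold auxL
      split_ifs <;> ring
    simp only [← e3]
    refine Finset.sum_subset ?_ ?_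
    · intro q hq
      rw [hmem] at hq
      simp; omega
    · intro q hq hq'
      rw [hmem] at hq'
      simp only [Finset.mem_filter] at hq
      have : auxL x (ξ i) q = 0 := by
        unfold auxL
        have z1 : (auxP x (ξ i).1).coeff q.1 * (auxP x (ξ i).2).coeff q.2 = 0 := by
          by_contra hne
          have y1 := auxP_coeff_ne x _ _ (by omega) (left_ne_zero_of_mul hne)
          have y2 := auxP_coeff_ne x _ _ (by omega) (right_ne_zero_of_mul hne)
          omega
        have z2 : (auxP x (ξ i).1).coeff q.2 * (auxP x (ξ i).2).coeff q.1 = 0 := by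
          by_contra hne
          have y1 := auxP_coeff_ne x _ _ (by omega) (left_ne_zero_of_mul hne)
          have y2 := auxP_coeff_ne x _ _ (by omega) (right_ne_zero_of_mul hne)
          omega
        simp [z1, z2]
      rw [this, zero_mul]
  have hLdet : L.det = 1 := by
    rw [aux_tri (fun i => toLex (ξ i)) hinj L]
    · refine Finset.prod_eq_one fun i _ => ?_
      obtain ⟨hb, hab, habp⟩ := hξmem i
      simp only [L, Matrix.of_apply, auxL]
      rw [auxP_coeff_self x _ (by omega), auxP_coeff_self x _ (by omega)]
      split_ifs with hne
      · have : (auxP x (ξ i).2).coeff (ξ i).1 = 0 := by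
          by_contra h0
          have := auxP_coeff_ne x _ _ (by omega) h0
          omega
        rw [this]; ring
      · ring
    · intro i k hik
      obtain ⟨hb, hab, habp⟩ := hξmem i
      obtain ⟨hb', hab', habp'⟩ := hξmem k
      simp only [L, Matrix.of_apply, auxL] at hik
      by_cases h0 : (auxP x (ξ i).1).coeff (ξ k).1 * (auxP x (ξ i).2).coeff (ξ k).2 = 0
      · rw [h0, zero_add] at hik
        split_ifs at hik with hne
        · have y1 := auxP_coeff_ne x _ _ (by omega) (left_ne_zero_of_mul hik)
          have y2 := auxP_coeff_ne x _ _ (by omega) (right_ne_zero_of_mul hik)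
          exact hle i k (by omega) (by omega)
        · exact absurd rfl hik
      · have y1 := auxP_coeff_ne x _ _ (by omega) (left_ne_zero_of_mul h0)
        have y2 := auxP_coeff_ne x _ _ (by omega) (right_ne_zero_of_mul h0)
        exact hle i k (by omega) (by omega)
  have hSdet : S.det = ∏ i, S i i := by
    rw [← Matrix.det_transpose, aux_tri (fun i => toLex (ξ i)) hinj S.transpose]
    · rfl
    · intro j i hij
      obtain ⟨hb, hab, habp⟩ := hξmem i
      obtain ⟨hb', hab', habp'⟩ := hξmem j
      simp only [S, Matrix.transpose_apply, Matrix.of_apply] at hij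
      by_cases h0 : (auxP x (ξ i).1).eval (x (ξ j).1) * (auxP x (ξ i).2).eval (x (ξ j).2) = 0
      · rw [h0, zero_add] at hij
        have y1 := auxP_eval_ne x _ _ (by omega) (left_ne_zero_of_mul hij)
        have y2 := auxP_eval_ne x _ _ (by omega) (right_ne_zero_of_mul hij)
        exact hle j i (by omega) (by omega)
      · have y1 := auxP_eval_ne x _ _ (by omega) (left_ne_zero_of_mul h0)
        have y2 := auxP_eval_ne x _ _ (by omega) (right_ne_zero_of_mul h0)
        exact hle j i (by omega) (by omega)
  have hdiag : ∀ i, S i i = (if (ξ i).1 = (ξ i).2 then 2 else 1) *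
      ((auxP x (ξ i).1).eval (x (ξ i).1) * (auxP x (ξ i).2).eval (x (ξ i).2)) := by
    intro i
    obtain ⟨hb, hab, habp⟩ := hξmem i
    simp only [S, Matrix.of_apply]
    split_ifs with h
    · rw [h]; ring
    · have : (auxP x (ξ i).1).eval (x (ξ i).2) = 0 := by
        by_contra h0
        have := auxP_eval_ne x _ _ (by omega) h0
        omega
      rw [this]; ring
  have hdet : T.det = S.det := by rw [← hLS, Matrix.det_mul, hLdet, one_mul]
  have hc := aux_count p (fun j => (auxP x j).eval (x j)) _ hmem
  rw [Finset.prod_image (fun a _ b _ h => hξinj h)] at hc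
  rw [hdet, hSdet, Finset.prod_congr rfl fun i _ => hdiag i, Finset.prod_mul_distrib, hc]
  simp only [auxP_eval, mul_pow, Finset.prod_mul_distrib, Finset.prod_pow]
  ring
end

section
/- For every p ∈ ℕ with p ≥ 2, the off-diagonal coefficient matrix K ∈ ℝ^{N_p×N_p} is non-singular; consequently the off-diagonal moment linear system K G(h) ω(h) = c(h) admits a unique solution whenever G(h) is non-singular. -/
open Polynomial in
theorem tri_unisolvent (d : ℕ) (x : ℕ → ℝ) (hx : Function.Injective x) (P : ℕ → ℝ[X])
    (hdeg : ∀ n, n ≤ d → (P n).natDegree ≤ d - n)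
    (hz : ∀ i j, i + j ≤ d → ∑ n ∈ Finset.range (d + 1), (P n).eval (x i) * (x j) ^ n = 0) :
    ∀ n, n ≤ d → P n = 0 := by
  have key : ∀ k, k ≤ d → P (d - k) = 0 ∧ ∀ n, n ≤ d → (P n).eval (x k) = 0 := by
    intro k
    induction k using Nat.strong_induction_on with
    | _ k ih =>
      intro hk
      have hrow : ∀ n, n ≤ d → (P n).eval (x k) = 0 := by
        let Q : ℝ[X] := ∑ n ∈ Finset.range (d - k + 1), C ((P n).eval (x k)) * X ^ n
        have hhigh : ∀ n, n ≤ d → d - k < n → P n = 0 := by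
          intro n hn hn'
          have := (ih (d - n) (by omega) (by omega)).1
          rwa [Nat.sub_sub_self hn] at this
        have hQ : Q = 0 := by
          apply Polynomial.eq_zero_of_natDegree_lt_card_of_eval_eq_zero Q
            (f := fun j : Fin (d - k + 1) => x j)
          · intro a b hab
            exact Fin.ext (hx hab)
          · intro j
            have h1 := hz k j (by omega)
            simp only [Q, eval_finsetSum, eval_mul, eval_C, eval_pow, eval_X]
            rw [← h1]
            apply Finset.sum_subset
            · intro a ha
              simp only [Finset.mem_range] at *
              omega
            · intro a ha ha'
              simp only [Finset.mem_range] at *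
              rw [hhigh a (by omega) (by omega)]
              simp
          · rw [Fintype.card_fin, Nat.lt_succ_iff]
            apply Polynomial.natDegree_sum_le_of_forall_le
            intro n hn
            simp only [Finset.mem_range] at hn
            exact (natDegree_C_mul_X_pow_le _ _).trans (by omega)
        intro n hn
        by_cases h : d - k < n
        · rw [hhigh n hn h]; simp
        · have h2 : Q.coeff n = 0 := by rw [hQ]; simp
          simp only [Q, finsetSum_coeff, coeff_C_mul, coeff_X_pow] at h2
          simpa [show n < d - k + 1 by omega] using h2
      refine ⟨?_, hrow⟩
      apply Polynomial.eq_zero_of_natDegree_lt_card_of_eval_eq_zero _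
        (f := fun j : Fin (k + 1) => x j)
      · intro a b hab
        exact Fin.ext (hx hab)
      · intro j
        rcases Nat.lt_or_ge j.1 k with h | h
        · exact (ih j.1 h (by omega)).2 _ (by omega)
        · have : j.1 = k := by omega
          simp only [this]
          exact hrow _ (by omega)
      · rw [Fintype.card_fin, Nat.lt_succ_iff]
        exact (hdeg _ (by omega)).trans (by omega)
  intro n hn
  have := (key (d - n) (by omega)).1
  rwa [Nat.sub_sub_self hn] at this

theorem sum_Goff (a b : ℕ) (hb : 1 ≤ b) (hab : b ≤ a) (f : ℤ × ℤ → ℝ)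
    (h1 : ∀ x y, f (-x, y) = f (x, y)) (h2 : ∀ x y, f (x, -y) = f (x, y)) :
    ∃ c : ℝ, c ≠ 0 ∧ (c = if a = b then 2 else 4) ∧
      ∑ β ∈ Goff (a, b), f β = c * (f (a, b) + f (b, a)) := by
  refine ⟨if a = b then 2 else 4, by split_ifs <;> norm_num, rfl, ?_⟩
  by_cases h : a = b
  · subst h
    have : Goff (a, a) = {((a : ℤ), (a : ℤ)), (-(a : ℤ), (a : ℤ)), ((a : ℤ), -(a : ℤ)),
        (-(a : ℤ), -(a : ℤ))} := by
      ext z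
      simp only [Goff, Finset.mem_insert, Finset.mem_singleton]
      tauto
    rw [this]
    repeat rw [Finset.sum_insert (by
      simp only [Finset.mem_insert, Finset.mem_singleton, Prod.mk.injEq]; omega)]
    rw [Finset.sum_singleton]
    simp only [h1, h2, if_true]
    ring
  · unfold Goff
    repeat rw [Finset.sum_insert (by
      simp only [Finset.mem_insert, Finset.mem_singleton, Prod.mk.injEq]; omega)]
    rw [Finset.sum_singleton]
    simp only [h1, h2, if_neg h]
    ring

theorem off_diagonal_coefficient_matrix_nonsingular
    (p : ℕ) (hp : 2 ≤ p) (Np : ℕ)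
    (ξ : Fin Np → ℕ × ℕ) (hξinj : Function.Injective ξ)
    (hξmem : ∀ i, 1 ≤ (ξ i).2 ∧ (ξ i).2 ≤ (ξ i).1 ∧ (ξ i).1 + (ξ i).2 ≤ p)
    (hξsurj : ∀ γ : ℕ × ℕ, 1 ≤ γ.2 → γ.2 ≤ γ.1 → γ.1 + γ.2 ≤ p → ∃ i, ξ i = γ)
    (K : Matrix (Fin Np) (Fin Np) ℝ)
    (hK : ∀ i j, K i j = ∑ β ∈ Goff (ξ j),
      ((β.1 * β.2).sign : ℝ) *
        ((β.1 : ℝ) ^ (2 * (ξ i).1 - 1) * (β.2 : ℝ) ^ (2 * (ξ i).2 - 1))) :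
    K.det ≠ 0 ∧
    ∀ G : Matrix (Fin Np) (Fin Np) ℝ, G.det ≠ 0 →
      ∀ c : Fin Np → ℝ, ∃! ω : Fin Np → ℝ, (K * G).mulVec ω = c := by
  have hdet : K.det ≠ 0 := by
    intro h0
    obtain ⟨v, hv0, hv⟩ := Matrix.exists_vecMul_eq_zero_iff.mpr h0
    apply hv0
    have hKv : ∀ j, ∑ i, v i * K i j = 0 := fun j => congrFun hv j
    -- entry formula
    have hent : ∀ j, ∃ c : ℝ, c ≠ 0 ∧ ∀ i, K i j = c *
        ((((ξ j).1 : ℝ) ^ 2) ^ ((ξ i).1 - 1) * (((ξ j).2 : ℝ) ^ 2) ^ ((ξ i).2 - 1) +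
         (((ξ j).2 : ℝ) ^ 2) ^ ((ξ i).1 - 1) * (((ξ j).1 : ℝ) ^ 2) ^ ((ξ i).2 - 1)) := by
      intro j
      obtain ⟨hb, hab, -⟩ := hξmem j
      refine ⟨(if (ξ j).1 = (ξ j).2 then 2 else 4) * ((ξ j).1 * (ξ j).2), ?_, ?_⟩
      · have : ((ξ j).1 : ℝ) ≠ 0 := by norm_cast; omega
        have : ((ξ j).2 : ℝ) ≠ 0 := by norm_cast; omega
        split_ifs <;> positivity
      · intro i
        obtain ⟨hi1, hi2, -⟩ := hξmem i
        obtain ⟨c, -, hc, hs⟩ := sum_Goff (ξ j).1 (ξ j).2 hb hab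
          (fun β => ((β.1 * β.2).sign : ℝ) *
            ((β.1 : ℝ) ^ (2 * (ξ i).1 - 1) * (β.2 : ℝ) ^ (2 * (ξ i).2 - 1)))
          (by
            intro x y
            have ho : Odd (2 * (ξ i).1 - 1) := ⟨(ξ i).1 - 1, by omega⟩
            simp [ho.neg_pow])
          (by
            intro x y
            have ho : Odd (2 * (ξ i).2 - 1) := ⟨(ξ i).2 - 1, by omega⟩
            simp [ho.neg_pow])
        rw [hK, ← hc]
        refine hs.trans ?_
        have s1 : (((ξ j).1 : ℤ) * ((ξ j).2 : ℤ)).sign = 1 :=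
          Int.sign_eq_one_of_pos (mul_pos (by omega) (by omega))
        have s2 : (((ξ j).2 : ℤ) * ((ξ j).1 : ℤ)).sign = 1 :=
          Int.sign_eq_one_of_pos (mul_pos (by omega) (by omega))
        simp only [s1, s2]
        have e : ∀ n, 1 ≤ n → 2 * n - 1 = 2 * (n - 1) + 1 := fun n hn => by omega
        rw [e _ hi1, e _ (hi1.trans hi2)]
        push_cast
        simp only [pow_succ, pow_mul]
        ring
    have hvan : ∀ a b : ℕ, 1 ≤ b → b ≤ a → a + b ≤ p →
        ∑ i, v i * (((a : ℝ) ^ 2) ^ ((ξ i).1 - 1) * ((b : ℝ) ^ 2) ^ ((ξ i).2 - 1) +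
         ((b : ℝ) ^ 2) ^ ((ξ i).1 - 1) * ((a : ℝ) ^ 2) ^ ((ξ i).2 - 1)) = 0 := by
      intro a b h1 h2 h3
      obtain ⟨j, hj⟩ := hξsurj (a, b) h1 h2 h3
      obtain ⟨c, hc, hcK⟩ := hent j
      have h := hKv j
      simp only [hcK, hj] at h
      refine (mul_eq_zero.mp (?_ : c * _ = 0)).resolve_left hc
      rw [← h, Finset.mul_sum]
      exact Finset.sum_congr rfl fun i _ => by ring
    have hvan' : ∀ a b : ℕ, 1 ≤ b → 1 ≤ a → a + b ≤ p →
        ∑ i, v i * (((a : ℝ) ^ 2) ^ ((ξ i).1 - 1) * ((b : ℝ) ^ 2) ^ ((ξ i).2 - 1) +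
         ((b : ℝ) ^ 2) ^ ((ξ i).1 - 1) * ((a : ℝ) ^ 2) ^ ((ξ i).2 - 1)) = 0 := by
      intro a b h1 h2 h3
      rcases le_total b a with h | h
      · exact hvan a b h1 h h3
      · rw [← hvan b a h2 h (by omega)]
        exact Finset.sum_congr rfl fun i _ => by ring
    let P : ℕ → Polynomial ℝ := fun n => ∑ i, Polynomial.C (v i) *
      ((if (ξ i).2 - 1 = n then Polynomial.X ^ ((ξ i).1 - 1) else 0) +
       (if (ξ i).1 - 1 = n then Polynomial.X ^ ((ξ i).2 - 1) else 0))
    have hP := tri_unisolvent (p - 2) (fun i => ((i + 1 : ℕ) : ℝ) ^ 2)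
      (by
        intro a b hab
        have := (pow_left_inj₀ (Nat.cast_nonneg _) (Nat.cast_nonneg _) two_ne_zero).mp hab
        have := Nat.cast_injective this
        omega) P
      (by
        intro n hn
        apply Polynomial.natDegree_sum_le_of_forall_le
        intro i _
        obtain ⟨h1, h2, h3⟩ := hξmem i
        refine (Polynomial.natDegree_C_mul_le _ _).trans ?_
        refine (Polynomial.natDegree_add_le _ _).trans (max_le ?_ ?_)
        · split_ifs
          · rw [Polynomial.natDegree_X_pow]; omega
          · simp
        · split_ifs
          · rw [Polynomial.natDegree_X_pow]; omega
          · simp)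
      (by
        intro a b hab
        rw [← hvan' (a + 1) (b + 1) (by omega) (by omega) (by omega)]
        simp only [P, Polynomial.eval_finsetSum, Finset.sum_mul]
        rw [Finset.sum_comm]
        refine Finset.sum_congr rfl fun i _ => ?_
        obtain ⟨h1, h2, h3⟩ := hξmem i
        simp only [Polynomial.eval_mul, Polynomial.eval_C, Polynomial.eval_add, mul_assoc,
          ← Finset.mul_sum, add_mul, Finset.sum_add_distrib, apply_ite (Polynomial.eval _),
          Polynomial.eval_pow, Polynomial.eval_X, Polynomial.eval_zero, ite_mul, zero_mul,
          Finset.sum_ite_eq, Finset.mem_range]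
        rw [if_pos (by omega), if_pos (by omega)]
        ring)
    funext k
    obtain ⟨k1, k2, k3⟩ := hξmem k
    have hk := congrArg (fun q => Polynomial.coeff q ((ξ k).1 - 1)) (hP ((ξ k).2 - 1) (by omega))
    simp only [P, Polynomial.finsetSum_coeff, Polynomial.coeff_C_mul, Polynomial.coeff_add,
      Polynomial.coeff_zero] at hk
    rw [Finset.sum_eq_single k] at hk
    · rcases mul_eq_zero.mp hk with h | h
      · exact h
      · exfalso
        rw [if_pos rfl] at h
        simp only [Polynomial.coeff_X_pow, if_true] at h
        split_ifs at h
        · simp only [Polynomial.coeff_X_pow] at h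
          split_ifs at h <;> norm_num at h
        · norm_num at h
    · intro i _ hik
      obtain ⟨h1, h2, h3⟩ := hξmem i
      have hne : ¬ ((ξ i).1 = (ξ k).1 ∧ (ξ i).2 = (ξ k).2) := fun h =>
        hik (hξinj (Prod.ext h.1 h.2))
      have e1 : (if (ξ i).2 - 1 = (ξ k).2 - 1 then (Polynomial.X : Polynomial ℝ) ^ ((ξ i).1 - 1)
          else 0).coeff ((ξ k).1 - 1) = 0 := by
        split_ifs
        · rw [Polynomial.coeff_X_pow, if_neg (by omega)]
        · simp
      have e2 : (if (ξ i).1 - 1 = (ξ k).2 - 1 then (Polynomial.X : Polynomial ℝ) ^ ((ξ i).2 - 1)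
          else 0).coeff ((ξ k).1 - 1) = 0 := by
        split_ifs
        · rw [Polynomial.coeff_X_pow, if_neg (by omega)]
        · simp
      rw [e1, e2]; simp
    · simp
  refine ⟨hdet, fun G hG c => ?_⟩
  have hu : IsUnit (K * G).det := by
    rw [Matrix.det_mul]
    exact (mul_ne_zero hdet hG).isUnit
  refine ⟨(K * G)⁻¹.mulVec c, ?_, ?_⟩
  · simp only [Matrix.mulVec_mulVec]
    rw [Matrix.mul_nonsing_inv _ hu, Matrix.one_mulVec]
  · intro w hw
    rw [← hw, Matrix.mulVec_mulVec, Matrix.nonsing_inv_mul _ hu, Matrix.one_mulVec]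
end
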